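/- Let n ≥ 1 and K > 1. Define U : ℝⁿ×ℝⁿ → ℝ by U(x,y) = ((K−1)/2)(|y|² − |x|²) + 1/(2(K−1)) if |x|+|y| ≤ (K−1)^{−1}, and U(x,y) = K|y| + (K−1)(|x|+1) − K − K(|x|+1)·log[((K−1)/K)(|x|+|y|+1)] if |x|+|y| > (K−1)^{−1}. Then for all x, y ∈ ℝⁿ one has U(x,y) ≥ max{|y|, 1/(2(K−1))} − K·Ψ(|x|). -/

import Mathlib

/-!
Write `a = ‖x‖`, `b = ‖y‖`, `s = a + 1`, `c = K - 1`. Everything rests on the elementary bound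
`Ψ(a) ≥ a² / (2(1 + a))` and on `log r ≤ r - 1`.

* If `a + b ≤ 1/c`, then `c/K ≤ 1/(1 + a)`, so the elementary bound gives `K Ψ(a) ≥ c a²/2`. The
  remainder `c b²/2 + 1/(2c)` is at least `1/(2c)`, and at least `b` by completing the square.
* If `a + b > 1/c`, the difference of `U` and `b - K Ψ(a)` is exactly `K s (r - 1 - log r)` with
  `r = (c/K)(s + b)/s`. For the comparison with `1/(2c)`, `U` is nondecreasing in `b`, so the
  worst case is the smallest admissible `b`, namely `max(0, 1/c - a)`. When `a ≤ 1/c`, a tangent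
  line of the logarithm at that point leaves `K Ψ(a) ≥ a - 1/(2c)`; when `a ≥ 1/c`, the tangent
  line at `b = 0` leaves a lower bound for `log (K/c)`, which is the elementary bound at `1/c`.
-/

open Real

/-- The Young function `Ψ(t) = (t+1)log(t+1) − t`. -/
noncomputable def PsiY (t : ℝ) : ℝ := (t + 1) * Real.log (t + 1) - t

/-- The special function for the sharp logarithmic estimate. -/
noncomputable def Ulog (K : ℝ) {n : ℕ} (x y : EuclideanSpace ℝ (Fin n)) : ℝ :=
  if ‖x‖ + ‖y‖ ≤ (K - 1)⁻¹ then
    ((K - 1) / 2) * (‖y‖ ^ 2 - ‖x‖ ^ 2) + 1 / (2 * (K - 1))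
  else
    K * ‖y‖ + (K - 1) * (‖x‖ + 1) - K -
      K * (‖x‖ + 1) * Real.log ((K - 1) / K * (‖x‖ + ‖y‖ + 1))

/-- Cleared of denominators: `Ψ(a) ≥ a² / (2(1 + a))`, from `log (1 + a) ≥ 2a / (a + 2)`. -/
lemma PsiY_lower {a : ℝ} (ha : 0 ≤ a) : a ^ 2 ≤ 2 * (1 + a) * PsiY a := by
  have h := Real.le_log_one_add_of_nonneg ha
  rw [div_le_iff₀ (by linarith), add_comm 1 a] at h
  unfold PsiY
  set L := Real.log (a + 1)
  have h1 : 0 ≤ (1 + a) ^ 2 * (L * (a + 2) - 2 * a) :=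
    mul_nonneg (sq_nonneg _) (by linarith)
  have h2 : 0 ≤ (a + 2) * (2 * (1 + a) * ((a + 1) * L - a) - a ^ 2) := by
    nlinarith [pow_nonneg ha 3]
  have h3 := nonneg_of_mul_nonneg_right h2 (by linarith)
  linarith

/-- The bound `U ≥ max - K Ψ` on the inner region, with `K = c + 1`. -/
lemma inner_bound {a b c : ℝ} (ha : 0 ≤ a) (hb : 0 ≤ b) (hc : 0 < c) (h : a + b ≤ c⁻¹) :
    max b (1 / (2 * c)) - (c + 1) * PsiY a ≤ c / 2 * (b ^ 2 - a ^ 2) + 1 / (2 * c) := by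
  have hca : c * a ≤ 1 := by
    calc c * a ≤ c * c⁻¹ := by gcongr; linarith
      _ = 1 := mul_inv_cancel₀ hc.ne'
  have hP := PsiY_lower ha
  have hP0 : 0 ≤ PsiY a := by
    by_contra hn
    nlinarith [sq_nonneg a, mul_pos_of_neg_of_neg (not_le.mp hn) (by linarith : -(1 + a) < 0)]
  have key : c / 2 * a ^ 2 ≤ (c + 1) * PsiY a := by
    nlinarith [mul_le_mul_of_nonneg_left hP hc.le, mul_nonneg hP0 (sub_nonneg.2 hca)]
  have hsq : b ≤ c / 2 * b ^ 2 + 1 / (2 * c) := by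
    have : c / 2 * b ^ 2 + 1 / (2 * c) - b = (c * b - 1) ^ 2 / (2 * c) := by
      field_simp; ring
    have : 0 ≤ (c * b - 1) ^ 2 / (2 * c) := by positivity
    linarith
  have hb2 : 0 ≤ c / 2 * b ^ 2 := by positivity
  rw [sub_le_iff_le_add, max_le_iff]
  constructor <;> linarith

/-- On the outer region, `U - b + K Ψ(a)` equals `K s (r - 1 - log r)` for `s = a + 1` and
`r = (c / K) (s + b) / s`. -/
lemma outer_bound_norm {a b c : ℝ} (ha : 0 ≤ a) (hb : 0 ≤ b) (hc : 0 < c) :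
    b - (c + 1) * PsiY a ≤ (c + 1) * b + c * (a + 1) - (c + 1) -
      (c + 1) * (a + 1) * Real.log (c / (c + 1) * (a + b + 1)) := by
  have hs : 0 < a + 1 := by linarith
  have hm : 0 < c / (c + 1) * (a + b + 1) := by positivity
  have h := Real.log_le_sub_one_of_pos (div_pos hm hs)
  rw [Real.log_div hm.ne' hs.ne'] at h
  have h2 := mul_le_mul_of_nonneg_left h (by positivity : 0 ≤ (c + 1) * (a + 1))
  have e : (c + 1) * (a + 1) * (c / (c + 1) * (a + b + 1) / (a + 1) - 1) =
      c * (a + b + 1) - (c + 1) * (a + 1) := by field_simp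
  rw [e] at h2
  unfold PsiY
  linarith

/-- The comparison with `1 / (2c)` on the outer region. -/
lemma outer_bound_const {a b c : ℝ} (ha : 0 ≤ a) (hb : 0 ≤ b) (hc : 0 < c) (h : c⁻¹ < a + b) :
    1 / (2 * c) - (c + 1) * PsiY a ≤ (c + 1) * b + c * (a + 1) - (c + 1) -
      (c + 1) * (a + 1) * Real.log (c / (c + 1) * (a + b + 1)) := by
  have hs : 0 < a + 1 := by linarith
  have hm : 0 < c / (c + 1) * (a + b + 1) := by positivity
  obtain ⟨u, hu, rfl⟩ : ∃ u : ℝ, 0 < u ∧ c = u⁻¹ := ⟨c⁻¹, inv_pos.2 hc, (inv_inv c).symm⟩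
  rw [inv_inv] at h
  have e1 : 1 / (2 * u⁻¹) = u / 2 := by field_simp
  rw [e1]
  rcases le_total a u with hau | hau
  · -- The boundary `a + b = u` is where the argument of the logarithm equals `1`.
    have hl := mul_le_mul_of_nonneg_left (Real.log_le_sub_one_of_pos hm)
      (by positivity : 0 ≤ (u⁻¹ + 1) * (a + 1))
    have e : (u⁻¹ + 1) * (a + 1) * (u⁻¹ / (u⁻¹ + 1) * (a + b + 1) - 1) =
        u⁻¹ * (a + 1) * (a + b + 1) - (u⁻¹ + 1) * (a + 1) := by field_simp
    rw [e] at hl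
    have hP := PsiY_lower ha
    -- The defect `(a - u)² + u a (u - a)` is nonnegative because `a ≤ u`.
    have hY : u * (2 * a - u) ≤ 2 * (1 + u) * PsiY a := by
      have h1 : (1 + a) * (u * (2 * a - u)) ≤ (1 + a) * (2 * (1 + u) * PsiY a) := by
        nlinarith [mul_le_mul_of_nonneg_left hP (by linarith : 0 ≤ 1 + u), sq_nonneg (a - u),
          mul_nonneg (mul_nonneg hu.le ha) (sub_nonneg.2 hau)]
      exact le_of_mul_le_mul_left h1 (by linarith)
    have hY2 : a - u / 2 ≤ (u⁻¹ + 1) * PsiY a := by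
      have : (u⁻¹ + 1) * PsiY a = (2 * (1 + u) * PsiY a) / (2 * u) := by field_simp
      rw [this, le_div_iff₀ (by positivity)]
      linarith
    have hB : 0 ≤ u⁻¹ * (u - a) * (a + b - u) :=
      mul_nonneg (mul_nonneg hc.le (by linarith)) (by linarith)
    have hui : u⁻¹ * u = 1 := inv_mul_cancel₀ hu.ne'
    have hB2 : u⁻¹ * (u - a) * (a + b - u) =
        (a + b) - u - u⁻¹ * a * (a + b) + a := by
      linear_combination (a + b - u + a) * hui
    linarith
  · have hsb : 0 < a + b + 1 := by linarith
    have hl := Real.log_le_sub_one_of_pos (div_pos hsb hs)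
    rw [Real.log_div hsb.ne' hs.ne'] at hl
    have e2 : u⁻¹ / (u⁻¹ + 1) = (u + 1)⁻¹ := by field_simp; ring
    rw [e2, Real.log_mul (by positivity) hsb.ne', Real.log_inv]
    have hl2 := mul_le_mul_of_nonneg_left hl (by positivity : 0 ≤ (u⁻¹ + 1) * (a + 1))
    have e : (u⁻¹ + 1) * (a + 1) * ((a + b + 1) / (a + 1) - 1) = (u⁻¹ + 1) * b := by
      field_simp; ring
    rw [e] at hl2
    have hP := PsiY_lower hu.le
    unfold PsiY at hP ⊢
    set M := Real.log (u + 1)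
    have hM : u / 2 ≤ (1 + u) * ((u⁻¹ + 1) * M - 1) := by
      have : (1 + u) * ((u⁻¹ + 1) * M - 1) =
          (2 * (1 + u) * ((u + 1) * M - u)) / (2 * u) := by field_simp; ring
      rw [this, le_div_iff₀ (by positivity)]
      linarith
    have hM0 : 0 ≤ (u⁻¹ + 1) * M - 1 :=
      nonneg_of_mul_nonneg_right (by linarith : 0 ≤ (1 + u) * ((u⁻¹ + 1) * M - 1)) (by linarith)
    have hM1 : u / 2 ≤ (a + 1) * ((u⁻¹ + 1) * M - 1) :=
      hM.trans (mul_le_mul_of_nonneg_right (by linarith) hM0)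
    linarith

/-- The majorization `U(x,y) ≥ max{|y|, 1/(2(K−1))} − K Ψ(|x|)` for `K > 1`. -/
theorem stmt_10 (n : ℕ) (hn : 1 ≤ n) (K : ℝ) (hK : 1 < K)
    (x y : EuclideanSpace ℝ (Fin n)) :
    max ‖y‖ (1 / (2 * (K - 1))) - K * PsiY ‖x‖ ≤ Ulog K x y := by
  obtain ⟨c, rfl⟩ : ∃ c, K = c + 1 := ⟨K - 1, by ring⟩
  have hc : 0 < c := by linarith
  unfold Ulog
  rw [add_sub_cancel_right]
  split_ifs with h
  · exact inner_bound (norm_nonneg x) (norm_nonneg y) hc h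
  · rw [sub_le_iff_le_add, max_le_iff, ← sub_le_iff_le_add, ← sub_le_iff_le_add]
    exact ⟨outer_bound_norm (norm_nonneg x) (norm_nonneg y) hc,
      outer_bound_const (norm_nonneg x) (norm_nonneg y) hc (not_le.mp h)⟩
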